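/- Let (X,𝒜) be a separated measurable space. Then there exists an injective ring homomorphism ψ : M(X,𝒜) → C(RMax(X,𝒜), ℝ), where C(RMax(X,𝒜), ℝ) is the ring of continuous real-valued functions on RMax(X,𝒜) with its subspace hull-kernel topology; moreover ψ can be chosen so that ψ(f)(M_x) = f(x) for every f ∈ M(X,𝒜) and every x ∈ X. -/

import Mathlib

/-!
A real maximal ideal `M` assigns to each `f` the unique real `r` with `f - r ∈ M`, its value at `M`;
uniqueness holds because a nonzero constant is a unit. Uniqueness makes `f ↦ value of f at M` a
ring homomorphism, and at `M = M_x` it is evaluation at `x`, whence injectivity.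

Continuity in `M` rests on `M` being closed under enlarging zero sets: if `f ∈ M` and `g` vanishes
wherever `f` does, then `g = f * (g / f)` lies in `M`. Hence if `r` is the value of `f` at `M`, then
`φ r` is the value of `φ ∘ f` for every measurable `φ`. Taking for `φ` the indicator of an open set
`U`, the set of those `M` at which the value of `f` lies in `U` is the complement of `BR X (φ ∘ f)`.
-/

open MeasureTheory

/-- The ring `M(X, 𝒜)` of all real-valued measurable functions on a measurable
space `X`, as a subring of `X → ℝ` under pointwise operations. -/
def Mring (X : Type*) [MeasurableSpace X] : Subring (X → ℝ) where
  carrier := {f : X → ℝ | Measurable f}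
  mul_mem' hf hg := hf.mul hg
  one_mem' := measurable_one
  add_mem' hf hg := hf.add hg
  zero_mem' := measurable_zero
  neg_mem' hf := hf.neg

/-- The constant function with value `r`, as an element of `M(X, 𝒜)`. -/
def constM (X : Type*) [MeasurableSpace X] (r : ℝ) : Mring X :=
  ⟨fun _ => r, measurable_const⟩

/-- A real maximal ideal: a maximal ideal modulo which every function is
congruent to a constant. -/
def IsRealMax {X : Type*} [MeasurableSpace X] (M : Ideal (Mring X)) : Prop :=
  M.IsMaximal ∧ ∀ f : Mring X, ∃ r : ℝ, f - constM X r ∈ M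

/-- `RMax(X,𝒜)`: the set of real maximal ideals of `M(X,𝒜)`. -/
def RMax (X : Type*) [MeasurableSpace X] : Type _ :=
  {M : Ideal (Mring X) // IsRealMax M}

/-- `B_f^R = {M ∈ RMax(X,𝒜) : f ∈ M}`. -/
def BR (X : Type*) [MeasurableSpace X] (f : Mring X) : Set (RMax X) :=
  {M : RMax X | f ∈ M.1}

/-- The (subspace) hull-kernel topology on `RMax(X,𝒜)`: the sets `B_f^R` form a
base for the closed sets. -/
instance RMaxTop (X : Type*) [MeasurableSpace X] : TopologicalSpace (RMax X) :=
  TopologicalSpace.generateFrom {U : Set (RMax X) | ∃ f : Mring X, U = (BR X f)ᶜ}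

/-- The fixed ideal `M_p = {f ∈ M(X,𝒜) : f(p) = 0}`. -/
def Mp (X : Type*) [MeasurableSpace X] (p : X) : Ideal (Mring X) where
  carrier := {f : Mring X | (f : X → ℝ) p = 0}
  add_mem' := by
    intro a b ha hb
    simp only [Set.mem_setOf_eq] at *
    show ((a + b : Mring X) : X → ℝ) p = 0
    simp [ha, hb]
  zero_mem' := by simp only [Set.mem_setOf_eq]; rfl
  smul_mem' := by
    intro c f hf
    simp only [Set.mem_setOf_eq, smul_eq_mul] at *
    show ((c * f : Mring X) : X → ℝ) p = 0
    simp [hf]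

/-- A measurable space is separated if any two distinct points are separated by
a measurable set containing exactly one of them. -/
def Separated (X : Type*) [MeasurableSpace X] : Prop :=
  ∀ p q : X, p ≠ q → ∃ E : Set X, MeasurableSet E ∧ Xor' (p ∈ E) (q ∈ E)

section RealMaximal

variable {X : Type*} [MeasurableSpace X]

/-- Ideals of `M(X, 𝒜)` are determined by zero sets: the quotient `g / f` is measurable on all of `X`,
with the convention `a / 0 = 0` on the zero set of `f`. -/
theorem mem_of_zero_imp {M : Ideal (Mring X)} {f g : Mring X} (hf : f ∈ M)
    (h : ∀ x, (f : X → ℝ) x = 0 → (g : X → ℝ) x = 0) : g ∈ M := by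
  have hq : Measurable (fun x => (g : X → ℝ) x / (f : X → ℝ) x) := Measurable.div g.2 f.2
  have hg : g = (⟨_, hq⟩ : Mring X) * f := by
    apply Subtype.ext
    funext x
    change (g : X → ℝ) x = (g : X → ℝ) x / (f : X → ℝ) x * (f : X → ℝ) x
    by_cases hx : (f : X → ℝ) x = 0
    · simp [hx, h x hx]
    · field_simp
  rw [hg]
  exact M.mul_mem_left _ hf

theorem eq_of_sub_const_mem {M : Ideal (Mring X)} (hM : M.IsMaximal) {f : Mring X} {r s : ℝ}
    (hr : f - constM X r ∈ M) (hs : f - constM X s ∈ M) : r = s := by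
  by_contra hne
  apply hM.ne_top
  rw [Ideal.eq_top_iff_one]
  refine mem_of_zero_imp (M.sub_mem hr hs) fun x hx => ?_
  change ((f : X → ℝ) x - r) - ((f : X → ℝ) x - s) = 0 at hx
  exact absurd (by linarith) hne

/-- The value of `f` at the real maximal ideal `M`: the real `r` with `f - r ∈ M`. -/
noncomputable def valueAt (M : RMax X) (f : Mring X) : ℝ := (M.2.2 f).choose

theorem sub_valueAt_mem (M : RMax X) (f : Mring X) : f - constM X (valueAt M f) ∈ M.1 :=
  (M.2.2 f).choose_spec

theorem valueAt_eq {M : RMax X} {f : Mring X} {r : ℝ} (h : f - constM X r ∈ M.1) :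
    valueAt M f = r :=
  eq_of_sub_const_mem M.2.1 (sub_valueAt_mem M f) h

/-- The value at `M`, as a ring homomorphism. -/
noncomputable def valueHom (M : RMax X) : Mring X →+* ℝ where
  toFun := valueAt M
  map_one' := valueAt_eq (mem_of_zero_imp M.1.zero_mem fun _ _ => sub_self (1 : ℝ))
  map_zero' := valueAt_eq (mem_of_zero_imp M.1.zero_mem fun _ _ => sub_self (0 : ℝ))
  map_add' f g := by
    refine valueAt_eq ?_
    convert M.1.add_mem (sub_valueAt_mem M f) (sub_valueAt_mem M g) using 1
    apply Subtype.ext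
    funext x
    exact add_sub_add_comm _ _ _ _
  map_mul' f g := by
    refine valueAt_eq ?_
    convert M.1.add_mem (M.1.mul_mem_left g (sub_valueAt_mem M f))
      (M.1.mul_mem_left (constM X (valueAt M f)) (sub_valueAt_mem M g)) using 1
    apply Subtype.ext
    funext x
    change (f : X → ℝ) x * (g : X → ℝ) x - valueAt M f * valueAt M g =
      (g : X → ℝ) x * ((f : X → ℝ) x - valueAt M f) +
        valueAt M f * ((g : X → ℝ) x - valueAt M g)
    ring

/-- `φ ∘ f - φ r` vanishes wherever `f - r` does, so taking values commutes with `φ`. -/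
theorem valueAt_comp (M : RMax X) (f : Mring X) {φ : ℝ → ℝ} (hφ : Measurable φ) :
    valueAt M ⟨fun x => φ ((f : X → ℝ) x), hφ.comp f.2⟩ = φ (valueAt M f) := by
  refine valueAt_eq (mem_of_zero_imp (sub_valueAt_mem M f) fun x hx => ?_)
  change (f : X → ℝ) x - valueAt M f = 0 at hx
  change φ ((f : X → ℝ) x) - φ (valueAt M f) = 0
  rw [sub_eq_zero.mp hx, sub_self]

theorem mem_iff_valueAt_eq_zero (M : RMax X) (f : Mring X) : f ∈ M.1 ↔ valueAt M f = 0 := by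
  have h0 : f - constM X 0 = f := sub_zero f
  constructor
  · intro h
    exact valueAt_eq (by rwa [h0])
  · intro h
    have := sub_valueAt_mem M f
    rwa [h, h0] at this

theorem continuous_valueAt (f : Mring X) : Continuous fun M : RMax X => valueAt M f := by
  refine continuous_def.mpr fun U hU => ?_
  have hφ : Measurable (U.indicator (1 : ℝ → ℝ)) := measurable_one.indicator hU.measurableSet
  refine TopologicalSpace.isOpen_generateFrom_of_mem
    ⟨⟨fun x => U.indicator 1 ((f : X → ℝ) x), hφ.comp f.2⟩, ?_⟩
  ext M
  change valueAt M f ∈ U ↔ ¬ (_ ∈ M.1)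
  rw [mem_iff_valueAt_eq_zero, valueAt_comp M f hφ]
  simp

theorem isRealMax_Mp (x : X) : IsRealMax (Mp X x) := by
  constructor
  · let ev : Mring X →+* ℝ := (Pi.evalRingHom (fun _ : X => ℝ) x).comp (Mring X).subtype
    have hev : Function.Surjective ev := fun r => ⟨constM X r, rfl⟩
    exact RingHom.ker_isMaximal_of_surjective ev hev
  · exact fun f => ⟨(f : X → ℝ) x, sub_self ((f : X → ℝ) x)⟩

theorem valueAt_Mp (f : Mring X) (x : X) (h : IsRealMax (Mp X x)) :
    valueAt ⟨Mp X x, h⟩ f = (f : X → ℝ) x :=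
  valueAt_eq (sub_self ((f : X → ℝ) x))

end RealMaximal

/-- For a separated measurable space there is an injective ring homomorphism
`ψ : M(X,𝒜) → C(RMax(X,𝒜), ℝ)`, which moreover satisfies
`ψ(f)(M_x) = f(x)`. -/
theorem stmt5 {X : Type*} [MeasurableSpace X] (hsep : Separated X) :
    ∃ ψ : Mring X →+* C(RMax X, ℝ), Function.Injective ψ ∧
      ∀ (f : Mring X) (x : X) (h : IsRealMax (Mp X x)),
        ψ f ⟨Mp X x, h⟩ = (f : X → ℝ) x := by
  refine ⟨
    { toFun := fun f => ⟨fun M => valueAt M f, continuous_valueAt f⟩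
      map_one' := ContinuousMap.ext fun M => map_one (valueHom M)
      map_zero' := ContinuousMap.ext fun M => map_zero (valueHom M)
      map_add' := fun f g => ContinuousMap.ext fun M => map_add (valueHom M) f g
      map_mul' := fun f g => ContinuousMap.ext fun M => map_mul (valueHom M) f g },
    fun f g hfg => Subtype.ext (funext fun x => ?_), valueAt_Mp⟩
  have hx : valueAt ⟨Mp X x, isRealMax_Mp x⟩ f = valueAt ⟨Mp X x, isRealMax_Mp x⟩ g :=
    DFunLike.congr_fun hfg _
  rwa [valueAt_Mp, valueAt_Mp] at hx
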